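/- arXiv:2301.08777 — 2 statements merged into one kernel-verified Lean document; each statement's English description precedes it below -/
import Mathlib

section
/- Let G be a strong tournament of order at least 3. Then for all distinct nodes x and y of G, and for every α ∈ {x, x'} and β ∈ {y, y'}, the distance in ILTT(G) from α to β equals the distance in G from x to y; that is, d_G(x,y) = d_{ILTT(G)}(x,y) = d_{ILTT(G)}(x,y') = d_{ILTT(G)}(x',y) = d_{ILTT(G)}(x',y'). -/
open scoped Classical

noncomputable section

/-- A tournament: a finite directed graph where every pair of distinct nodes
is joined by exactly one arc. -/
structure Tournament where
  V : Type
  [fintypeV : Fintype V]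
  [decEqV : DecidableEq V]
  arc : V → V → Prop
  irrefl : ∀ x, ¬ arc x x
  exactlyOne : ∀ x y, x ≠ y → (arc x y ↔ ¬ arc y x)

attribute [instance] Tournament.fintypeV Tournament.decEqV

namespace Tournament

/-- The ILTT extension: vertices are `V ⊕ V` where `Sum.inl x` is the original
node `x` and `Sum.inr x` is its clone `x'`. -/
def ILTT (T : Tournament) : Tournament where
  V := T.V ⊕ T.V
  arc := fun u v =>
    match u, v with
    | Sum.inl x, Sum.inl y => T.arc x y
    | Sum.inl x, Sum.inr y => T.arc x y
    | Sum.inr x, Sum.inl y => T.arc x y ∨ x = y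
    | Sum.inr x, Sum.inr y => T.arc x y
  irrefl := by rintro (x | x) h <;> exact T.irrefl x h
  exactlyOne := by
    rintro (x | x) (y | y) hxy
    · exact T.exactlyOne x y (fun h => hxy (by rw [h]))
    · by_cases h : x = y
      · subst h; simp [T.irrefl x]
      · have := T.exactlyOne x y h
        simp only [not_or]
        constructor
        · intro ha; exact ⟨this.mp ha, fun h' => h h'.symm⟩
        · intro ha; exact this.mpr ha.1
    · by_cases h : x = y
      · subst h; simp [T.irrefl x]
      · have := T.exactlyOne x y h
        constructor
        · rintro (ha | ha)
          · exact this.mp ha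
          · exact absurd ha h
        · intro ha; exact Or.inl (this.mpr ha)
    · exact T.exactlyOne x y (fun h => hxy (by rw [h]))

/-- The dual ILTT extension: identical to `ILTT` except the arcs between
clones are reversed. -/
def ILTTd (T : Tournament) : Tournament where
  V := T.V ⊕ T.V
  arc := fun u v =>
    match u, v with
    | Sum.inl x, Sum.inl y => T.arc x y
    | Sum.inl x, Sum.inr y => T.arc x y
    | Sum.inr x, Sum.inl y => T.arc x y ∨ x = y
    | Sum.inr x, Sum.inr y => T.arc y x
  irrefl := by rintro (x | x) h <;> exact T.irrefl x h
  exactlyOne := by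
    rintro (x | x) (y | y) hxy
    · exact T.exactlyOne x y (fun h => hxy (by rw [h]))
    · by_cases h : x = y
      · subst h; simp [T.irrefl x]
      · have := T.exactlyOne x y h
        simp only [not_or]
        constructor
        · intro ha; exact ⟨this.mp ha, fun h' => h h'.symm⟩
        · intro ha; exact this.mpr ha.1
    · by_cases h : x = y
      · subst h; simp [T.irrefl x]
      · have := T.exactlyOne x y h
        constructor
        · rintro (ha | ha)
          · exact this.mp ha
          · exact absurd ha h
        · intro ha; exact Or.inl (this.mpr ha)
    · exact T.exactlyOne y x (fun h => hxy (by rw [h]))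

/-- A tournament is strong if, for every ordered pair of nodes, there is a
directed path from the first to the second. -/
def Strong (T : Tournament) : Prop := ∀ u v : T.V, Relation.ReflTransGen T.arc u v

/-- `HasWalk T u v n` : there is a directed walk of length `n` from `u` to `v`. -/
def HasWalk (T : Tournament) (u v : T.V) (n : ℕ) : Prop :=
  ∃ f : Fin (n + 1) → T.V, f 0 = u ∧ f (Fin.last n) = v ∧
    ∀ i : Fin n, T.arc (f i.castSucc) (f i.succ)

/-- The distance from `u` to `v`: the length of a shortest directed path. -/
def dist (T : Tournament) (u v : T.V) : ℕ := sInf {n | HasWalk T u v n}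

/-- The diameter: the maximum distance over ordered pairs of distinct nodes. -/
def diam (T : Tournament) : ℕ :=
  (Finset.univ.filter (fun p : T.V × T.V => p.1 ≠ p.2)).sup
    (fun p => T.dist p.1 p.2)

/-- The Wiener index: the sum of distances over ordered pairs of distinct nodes. -/
def wiener (T : Tournament) : ℕ :=
  ∑ p ∈ Finset.univ.filter (fun p : T.V × T.V => p.1 ≠ p.2), T.dist p.1 p.2

/-- The average distance `L(T) = W(T)/(m(m-1))` where `m` is the order. -/
def avgDist (T : Tournament) : ℝ :=
  (T.wiener : ℝ) / ((Fintype.card T.V : ℝ) * ((Fintype.card T.V : ℝ) - 1))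

/-- `J` is a subtournament of `K`. -/
def IsSubtournament (J K : Tournament) : Prop :=
  ∃ f : J.V → K.V, Function.Injective f ∧ ∀ u v : J.V, J.arc u v ↔ K.arc (f u) (f v)

/-- The linear order on `t` nodes. -/
def linearTournament (t : ℕ) : Tournament where
  V := Fin t
  arc := fun i j => i < j
  irrefl := fun i => lt_irrefl i
  exactlyOne := fun i j h => by
    rw [not_lt]
    exact ⟨le_of_lt, fun hle => hle.lt_of_ne h⟩

/-- A tournament is Hamiltonian if it has a directed cycle through all nodes. -/
def IsHamiltonian (T : Tournament) : Prop :=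
  ∃ f : ZMod (Fintype.card T.V) ≃ T.V, ∀ i, T.arc (f i) (f (i + 1))

/-- `S` is an in-dominating set. -/
def InDom (T : Tournament) (S : Finset T.V) : Prop :=
  ∀ u, u ∉ S → ∃ v ∈ S, T.arc u v

/-- `S` is an out-dominating set. -/
def OutDom (T : Tournament) (S : Finset T.V) : Prop :=
  ∀ u, u ∉ S → ∃ v ∈ S, T.arc v u

/-- The in-domination number. -/
def inDomNum (T : Tournament) : ℕ := sInf {n | ∃ S : Finset T.V, T.InDom S ∧ S.card = n}

/-- The out-domination number. -/
def outDomNum (T : Tournament) : ℕ := sInf {n | ∃ S : Finset T.V, T.OutDom S ∧ S.card = n}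

end Tournament

open Tournament

/-!
`ILTT(G)` is `G` with every node `x` replaced by a two-node tournament `x' → x`: the map sending a
node and its clone to the node is surjective and reflects arcs. For any such map between
tournaments, an arc of the source either maps to an arc or is collapsed, so walks project to walks
that are no longer. Conversely, a nonempty walk of the target lifts to a walk of the same length
between any prescribed preimages of its ends. Hence distances between nodes with distinct images
are preserved.
-/

namespace Tournament

section Walks

variable {T : Tournament} {u v : T.V} {n : ℕ}

theorem arc_asymm (h : T.arc u v) : ¬ T.arc v u := by
  have hne : u ≠ v := by
    rintro rfl
    exact T.irrefl u h
  exact (T.exactlyOne u v hne).1 h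

theorem hasWalk_zero_iff : T.HasWalk u v 0 ↔ u = v := by
  constructor
  · rintro ⟨f, rfl, rfl, -⟩
    rfl
  · rintro rfl
    exact ⟨fun _ => u, rfl, rfl, fun i => i.elim0⟩

theorem hasWalk_succ_iff : T.HasWalk u v (n + 1) ↔ ∃ w, T.arc u w ∧ T.HasWalk w v n := by
  constructor
  · rintro ⟨f, rfl, rfl, hf⟩
    exact ⟨f 1, hf 0, fun i => f i.succ, rfl, rfl, fun i => hf i.succ⟩
  · rintro ⟨w, huw, f, rfl, rfl, hf⟩
    exact ⟨Fin.cons u f, rfl, rfl, Fin.cases huw hf⟩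

theorem exists_hasWalk_of_reflTransGen (h : Relation.ReflTransGen T.arc u v) :
    ∃ n, T.HasWalk u v n := by
  induction h using Relation.ReflTransGen.head_induction_on with
  | refl => exact ⟨0, hasWalk_zero_iff.2 rfl⟩
  | head huw _ ih =>
    obtain ⟨n, hn⟩ := ih
    exact ⟨n + 1, hasWalk_succ_iff.2 ⟨_, huw, hn⟩⟩

theorem HasWalk.dist_le (h : T.HasWalk u v n) : T.dist u v ≤ n :=
  Nat.sInf_le h

theorem hasWalk_dist (h : Relation.ReflTransGen T.arc u v) : T.HasWalk u v (T.dist u v) :=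
  Nat.sInf_mem (exists_hasWalk_of_reflTransGen h)

end Walks

section ArcReflecting

variable {S T : Tournament} {p : S.V → T.V} {u v : S.V} {n : ℕ}

theorem arc_map_or_map_eq (hp : ∀ ⦃a b⦄, T.arc (p a) (p b) → S.arc a b) (h : S.arc u v) :
    T.arc (p u) (p v) ∨ p u = p v := by
  by_contra! ⟨hnot, hne⟩
  have hrev : T.arc (p v) (p u) := (T.exactlyOne _ _ hne.symm).2 hnot
  exact arc_asymm h (hp hrev)

theorem HasWalk.exists_le_map (hp : ∀ ⦃a b⦄, T.arc (p a) (p b) → S.arc a b)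
    (h : S.HasWalk u v n) : ∃ m ≤ n, T.HasWalk (p u) (p v) m := by
  induction n generalizing u with
  | zero => exact ⟨0, le_rfl, hasWalk_zero_iff.2 (congrArg p (hasWalk_zero_iff.1 h))⟩
  | succ n ih =>
    obtain ⟨w, huw, hwv⟩ := hasWalk_succ_iff.1 h
    obtain ⟨m, hmn, hwalk⟩ := ih hwv
    rcases arc_map_or_map_eq hp huw with harc | heq
    · exact ⟨m + 1, Nat.succ_le_succ hmn, hasWalk_succ_iff.2 ⟨p w, harc, hwalk⟩⟩
    · exact ⟨m, hmn.trans n.le_succ, heq ▸ hwalk⟩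

theorem HasWalk.of_map_succ (hp : ∀ ⦃a b⦄, T.arc (p a) (p b) → S.arc a b)
    (hsurj : Function.Surjective p) (h : T.HasWalk (p u) (p v) (n + 1)) :
    S.HasWalk u v (n + 1) := by
  induction n generalizing u with
  | zero =>
    obtain ⟨w, huw, hwv⟩ := hasWalk_succ_iff.1 h
    obtain rfl : w = p v := hasWalk_zero_iff.1 hwv
    exact hasWalk_succ_iff.2 ⟨v, hp huw, hasWalk_zero_iff.2 rfl⟩
  | succ n ih =>
    obtain ⟨w, huw, hwv⟩ := hasWalk_succ_iff.1 h
    obtain ⟨w, rfl⟩ := hsurj w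
    exact hasWalk_succ_iff.2 ⟨w, hp huw, ih hwv⟩

theorem HasWalk.of_map (hp : ∀ ⦃a b⦄, T.arc (p a) (p b) → S.arc a b)
    (hsurj : Function.Surjective p) (huv : p u ≠ p v) (h : T.HasWalk (p u) (p v) n) :
    S.HasWalk u v n := by
  cases n with
  | zero => exact absurd (hasWalk_zero_iff.1 h) huv
  | succ n => exact h.of_map_succ hp hsurj

theorem dist_map_eq (hp : ∀ ⦃a b⦄, T.arc (p a) (p b) → S.arc a b)
    (hsurj : Function.Surjective p) (huv : p u ≠ p v)
    (hreach : Relation.ReflTransGen T.arc (p u) (p v)) :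
    T.dist (p u) (p v) = S.dist u v := by
  have hleast : IsLeast {n | S.HasWalk u v n} (T.dist (p u) (p v)) := by
    refine ⟨(hasWalk_dist hreach).of_map hp hsurj huv, fun n hn => ?_⟩
    obtain ⟨m, hmn, hm⟩ := HasWalk.exists_le_map hp hn
    exact hm.dist_le.trans hmn
  exact hleast.csInf_eq.symm

end ArcReflecting

section ILTT

variable {T : Tournament}

/-- The projection of `ILTT(T)` onto `T`, sending a node and its clone to that node. -/
def proj (T : Tournament) : T.ILTT.V → T.V := Sum.elim id id

theorem proj_surjective : Function.Surjective T.proj := fun x => ⟨Sum.inl x, rfl⟩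

theorem ILTT_arc_of_arc_proj : ∀ ⦃u v : T.ILTT.V⦄, T.arc (T.proj u) (T.proj v) → T.ILTT.arc u v
  | Sum.inl _, Sum.inl _, h => h
  | Sum.inl _, Sum.inr _, h => h
  | Sum.inr _, Sum.inl _, h => Or.inl h
  | Sum.inr _, Sum.inr _, h => h

theorem dist_proj_eq_dist_ILTT {u v : T.ILTT.V} (huv : T.proj u ≠ T.proj v)
    (hreach : Relation.ReflTransGen T.arc (T.proj u) (T.proj v)) :
    T.dist (T.proj u) (T.proj v) = T.ILTT.dist u v :=
  dist_map_eq ILTT_arc_of_arc_proj proj_surjective huv hreach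

end ILTT

end Tournament

theorem stmt3_general (G : Tournament) {x y : G.V} (hxy : x ≠ y)
    (hreach : Relation.ReflTransGen G.arc x y) :
    G.dist x y = (G.ILTT).dist (Sum.inl x) (Sum.inl y) ∧
    G.dist x y = (G.ILTT).dist (Sum.inl x) (Sum.inr y) ∧
    G.dist x y = (G.ILTT).dist (Sum.inr x) (Sum.inl y) ∧
    G.dist x y = (G.ILTT).dist (Sum.inr x) (Sum.inr y) :=
  ⟨dist_proj_eq_dist_ILTT (u := Sum.inl x) (v := Sum.inl y) hxy hreach,
    dist_proj_eq_dist_ILTT (u := Sum.inl x) (v := Sum.inr y) hxy hreach,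
    dist_proj_eq_dist_ILTT (u := Sum.inr x) (v := Sum.inl y) hxy hreach,
    dist_proj_eq_dist_ILTT (u := Sum.inr x) (v := Sum.inr y) hxy hreach⟩

/-- In a strong tournament `G` of order at least 3, for distinct
nodes `x, y` and any `α ∈ {x, x'}`, `β ∈ {y, y'}`, the distance in `ILTT(G)` from
`α` to `β` equals the distance in `G` from `x` to `y`. -/
theorem stmt3 (G : Tournament) (hcard : 3 ≤ Fintype.card G.V) (hG : G.Strong) :
    ∀ x y : G.V, x ≠ y →
      G.dist x y = (G.ILTT).dist (Sum.inl x) (Sum.inl y) ∧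
      G.dist x y = (G.ILTT).dist (Sum.inl x) (Sum.inr y) ∧
      G.dist x y = (G.ILTT).dist (Sum.inr x) (Sum.inl y) ∧
      G.dist x y = (G.ILTT).dist (Sum.inr x) (Sum.inr y) :=
  fun x y hxy => stmt3_general G hxy (hG x y)
end
end

section
/- Let G be a strong tournament of order n ≥ 3. Then for every integer t ≥ 0, the Wiener index of ILTT^t(G) satisfies W(ILTT^t(G)) = 2^{t+1}(2^t − 1)n + 4^t · W(G). -/
open scoped Classical

noncomputable section

open Tournament

/-!
Projecting each clone to its original turns a walk of `T.ILTT` into a walk of `T` that is no longer,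
and every walk of `T` of positive length lifts with arbitrary endpoints in the two fibres. So
distances between nodes over distinct nodes of `T` are unchanged, while over a single node `x` we
have `d(x', x) = 1` and `d(x, x') = 3`: a path from `x` to `x'` of length at most two would project
to a closed walk of the same length, which no tournament has, and a triangle at `x` lifts to a path
of length three. There is such a triangle because otherwise the out-neighbourhood of `x` would be
closed under arcs and so contain `x`. Summing over the four kinds of pairs gives
`W(ILTT T) = 4 |T| + 4 W(T)`, a recursion in `t`.
-/

namespace Tournament

variable {T : Tournament}

theorem arc_asymm_s7 {x y : T.V} (h : T.arc x y) : ¬ T.arc y x :=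
  (T.exactlyOne x y fun hxy => T.irrefl y (hxy ▸ h)).1 h

theorem hasWalk_zero {u v : T.V} : T.HasWalk u v 0 ↔ u = v := by
  constructor
  · rintro ⟨f, rfl, rfl, -⟩
    rfl
  · rintro rfl
    exact ⟨fun _ => u, rfl, rfl, fun i => i.elim0⟩

theorem hasWalk_succ {u v : T.V} {n : ℕ} :
    T.HasWalk u v (n + 1) ↔ ∃ w, T.arc u w ∧ T.HasWalk w v n := by
  constructor
  · rintro ⟨f, rfl, rfl, h⟩
    exact ⟨f 1, h 0, fun i => f i.succ, rfl, rfl, fun i => h i.succ⟩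
  · rintro ⟨w, hw, f, rfl, rfl, h⟩
    exact ⟨Fin.cons u f, rfl, rfl, Fin.cases hw h⟩

theorem hasWalk_one {u v : T.V} : T.HasWalk u v 1 ↔ T.arc u v := by
  simp only [hasWalk_succ, hasWalk_zero, exists_eq_right]

theorem exists_hasWalk_iff {u v : T.V} :
    (∃ n, T.HasWalk u v n) ↔ Relation.ReflTransGen T.arc u v := by
  constructor
  · rintro ⟨n, h⟩
    induction n generalizing u with
    | zero => rw [hasWalk_zero.1 h]
    | succ n ih =>
      obtain ⟨w, hw, h⟩ := hasWalk_succ.1 h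
      exact .head hw (ih h)
  · intro h
    induction h using Relation.ReflTransGen.head_induction_on with
    | refl => exact ⟨0, hasWalk_zero.2 rfl⟩
    | head hab _ ih =>
      obtain ⟨n, hn⟩ := ih
      exact ⟨n + 1, hasWalk_succ.2 ⟨_, hab, hn⟩⟩

theorem dist_self (u : T.V) : T.dist u u = 0 :=
  Nat.sInf_eq_zero.2 (.inl (hasWalk_zero.2 rfl))

theorem dist_eq_one_of_arc {u v : T.V} (h : T.arc u v) : T.dist u v = 1 := by
  refine IsLeast.csInf_eq ⟨hasWalk_one.2 h, fun n hn => Nat.one_le_iff_ne_zero.2 ?_⟩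
  rintro rfl
  exact T.irrefl v (hasWalk_zero.1 hn ▸ h)

theorem wiener_eq_sum (T : Tournament) : T.wiener = ∑ u, ∑ v, T.dist u v := by
  rw [wiener, ← Fintype.sum_prod_type' T.dist]
  refine Finset.sum_filter_of_ne fun p _ hp huv => hp ?_
  rw [huv, dist_self]

namespace Strong

theorem forall_of_arc_closed (hT : T.Strong) {p : T.V → Prop} {x : T.V} (hx : p x)
    (hp : ∀ a b, p a → T.arc a b → p b) (y : T.V) : p y := by
  induction hT x y with
  | refl => exact hx
  | tail _ hab ih => exact hp _ _ ih hab

variable [Nontrivial T.V]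

theorem exists_arc (hT : T.Strong) (x : T.V) : ∃ y, T.arc x y := by
  obtain ⟨y, hy⟩ := exists_ne x
  obtain rfl | ⟨z, hz, -⟩ := (hT x y).cases_head
  · exact absurd rfl hy
  · exact ⟨z, hz⟩

theorem exists_hasWalk_pos (hT : T.Strong) (x y : T.V) : ∃ n > 0, T.HasWalk x y n := by
  obtain ⟨z, hz⟩ := hT.exists_arc x
  obtain ⟨n, hn⟩ := exists_hasWalk_iff.2 (hT z y)
  exact ⟨n + 1, n.succ_pos, hasWalk_succ.2 ⟨z, hz, hn⟩⟩

theorem exists_triangle (hT : T.Strong) (x : T.V) :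
    ∃ y z, T.arc x y ∧ T.arc y z ∧ T.arc z x := by
  by_contra! hno
  have out_closed (a b : T.V) (ha : T.arc x a) (hab : T.arc a b) : T.arc x b := by
    have hxb : x ≠ b := by
      rintro rfl
      exact arc_asymm_s7 ha hab
    exact (T.exactlyOne x b hxb).2 (hno a b ha hab)
  obtain ⟨y, hy⟩ := hT.exists_arc x
  exact T.irrefl x (hT.forall_of_arc_closed hy out_closed x)

theorem hasWalk_three_self (hT : T.Strong) (x : T.V) : T.HasWalk x x 3 := by
  obtain ⟨y, z, hxy, hyz, hzx⟩ := hT.exists_triangle x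
  exact hasWalk_succ.2 ⟨y, hxy, hasWalk_succ.2 ⟨z, hyz, hasWalk_one.2 hzx⟩⟩

end Strong

/-- The inclusion of `T` in `T.ILTT`. Together with `clone` it names the two summands of
`T.V ⊕ T.V`, so that lemmas about `T.ILTT` can be stated without unfolding its node type. -/
def original (T : Tournament) : T.V → T.ILTT.V := Sum.inl

/-- The map sending a node of `T` to its clone in `T.ILTT`. -/
def clone (T : Tournament) : T.V → T.ILTT.V := Sum.inr

/-- The node of `T` underlying a node of `T.ILTT`: originals are fixed and clones are sent to their
originals. Walks are compared along this projection. -/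
def base (T : Tournament) : T.ILTT.V → T.V := Sum.elim id id

@[simp]
theorem base_original (x : T.V) : T.base (T.original x) = x := rfl

@[simp]
theorem base_clone (x : T.V) : T.base (T.clone x) = x := rfl

theorem original_ne_clone (x y : T.V) : T.original x ≠ T.clone y := Sum.inl_ne_inr

theorem ILTT_arc_iff {u v : T.ILTT.V} :
    T.ILTT.arc u v ↔
      T.arc (T.base u) (T.base v) ∨ ∃ x, u = T.clone x ∧ v = T.original x := by
  rcases u with x | x <;> rcases v with y | y <;>
    simp [ILTT, base, original, clone, eq_comm]

theorem ILTT_arc_original_left {x : T.V} {v : T.ILTT.V} :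
    T.ILTT.arc (T.original x) v ↔ T.arc x (T.base v) := by
  simp [ILTT_arc_iff, original_ne_clone]

theorem ILTT_arc_clone_right {u : T.ILTT.V} {y : T.V} :
    T.ILTT.arc u (T.clone y) ↔ T.arc (T.base u) y := by
  simp [ILTT_arc_iff, (original_ne_clone _ _).symm]

theorem HasWalk.exists_base_le {u v : T.ILTT.V} {n : ℕ} (h : T.ILTT.HasWalk u v n) :
    ∃ m, T.HasWalk (T.base u) (T.base v) m ∧ m ≤ n := by
  induction n generalizing u with
  | zero => exact ⟨0, hasWalk_zero.2 (congrArg T.base (hasWalk_zero.1 h)), le_rfl⟩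
  | succ n ih =>
    obtain ⟨w, hw, h⟩ := hasWalk_succ.1 h
    obtain ⟨m, hm, hmn⟩ := ih h
    obtain hw | ⟨x, rfl, rfl⟩ := ILTT_arc_iff.1 hw
    · exact ⟨m + 1, hasWalk_succ.2 ⟨_, hw, hm⟩, Nat.succ_le_succ hmn⟩
    · exact ⟨m, hm, Nat.le_succ_of_le hmn⟩

theorem HasWalk.of_base {u v : T.ILTT.V} {n : ℕ} (h : T.HasWalk (T.base u) (T.base v) n)
    (hn : 0 < n) : T.ILTT.HasWalk u v n := by
  induction n, hn using Nat.le_induction generalizing u with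
  | base => exact hasWalk_one.2 (ILTT_arc_iff.2 (.inl (hasWalk_one.1 h)))
  | succ n _ ih =>
    obtain ⟨w, hw, h⟩ := hasWalk_succ.1 h
    exact hasWalk_succ.2 ⟨T.original w, ILTT_arc_iff.2 (.inl hw), ih h⟩

protected theorem Strong.ILTT [Nontrivial T.V] (hT : T.Strong) : T.ILTT.Strong := by
  intro u v
  obtain ⟨n, hn, h⟩ := hT.exists_hasWalk_pos (T.base u) (T.base v)
  exact exists_hasWalk_iff.1 ⟨n, h.of_base hn⟩

theorem dist_ILTT_of_base_ne {u v : T.ILTT.V} (huv : T.base u ≠ T.base v) :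
    T.ILTT.dist u v = T.dist (T.base u) (T.base v) := by
  refine csInf_eq_csInf_of_forall_exists_le (fun n hn => hn.exists_base_le)
    fun n hn => ⟨n, hn.of_base (Nat.pos_of_ne_zero ?_), le_rfl⟩
  rintro rfl
  exact huv (hasWalk_zero.1 hn)

theorem three_le_of_hasWalk_original_clone {x : T.V} {n : ℕ}
    (h : T.ILTT.HasWalk (T.original x) (T.clone x) n) : 3 ≤ n := by
  match n, h with
  | 0, h => exact absurd (hasWalk_zero.1 h) (original_ne_clone x x)
  | 1, h => exact absurd (ILTT_arc_original_left.1 (hasWalk_one.1 h)) (T.irrefl x)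
  | 2, h =>
    obtain ⟨w, hxw, hwx⟩ := hasWalk_succ.1 h
    exact absurd (ILTT_arc_clone_right.1 (hasWalk_one.1 hwx))
      (arc_asymm_s7 (ILTT_arc_original_left.1 hxw))
  | n + 3, _ => exact Nat.le_add_left 3 n

theorem dist_ILTT_original_clone_self {x : T.V} (hx : T.HasWalk x x 3) :
    T.ILTT.dist (T.original x) (T.clone x) = 3 :=
  IsLeast.csInf_eq ⟨hx.of_base three_pos, fun _ => three_le_of_hasWalk_original_clone⟩

theorem dist_ILTT_original_original (x y : T.V) :
    T.ILTT.dist (T.original x) (T.original y) = T.dist x y := by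
  rcases eq_or_ne x y with rfl | hxy
  · rw [dist_self, dist_self]
  · exact dist_ILTT_of_base_ne hxy

theorem dist_ILTT_clone_clone (x y : T.V) : T.ILTT.dist (T.clone x) (T.clone y) = T.dist x y := by
  rcases eq_or_ne x y with rfl | hxy
  · rw [dist_self, dist_self]
  · exact dist_ILTT_of_base_ne hxy

theorem dist_ILTT_clone_original (x y : T.V) :
    T.ILTT.dist (T.clone x) (T.original y) = T.dist x y + if x = y then 1 else 0 := by
  rcases eq_or_ne x y with rfl | hxy
  · rw [if_pos rfl, dist_self, dist_eq_one_of_arc (ILTT_arc_iff.2 (.inr ⟨x, rfl, rfl⟩))]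
  · rw [if_neg hxy]
    exact dist_ILTT_of_base_ne hxy

theorem Strong.dist_ILTT_original_clone [Nontrivial T.V] (hT : T.Strong) (x y : T.V) :
    T.ILTT.dist (T.original x) (T.clone y) = T.dist x y + if x = y then 3 else 0 := by
  rcases eq_or_ne x y with rfl | hxy
  · rw [if_pos rfl, dist_self, dist_ILTT_original_clone_self (hT.hasWalk_three_self x)]
  · rw [if_neg hxy]
    exact dist_ILTT_of_base_ne hxy

theorem sum_ILTT {M : Type*} [AddCommMonoid M] (f : T.ILTT.V → M) :
    ∑ u, f u = ∑ x : T.V, f (T.original x) + ∑ x : T.V, f (T.clone x) :=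
  Fintype.sum_sum_type f

theorem Strong.wiener_ILTT [Nontrivial T.V] (hT : T.Strong) :
    T.ILTT.wiener = 4 * Fintype.card T.V + 4 * T.wiener := by
  simp only [wiener_eq_sum, sum_ILTT, dist_ILTT_original_original, dist_ILTT_clone_clone,
    dist_ILTT_clone_original, hT.dist_ILTT_original_clone, Finset.sum_add_distrib,
    Fintype.sum_ite_eq, Finset.sum_const, Finset.card_univ, smul_eq_mul]
  ring

theorem card_ILTT (T : Tournament) : Fintype.card T.ILTT.V = 2 * Fintype.card T.V :=
  Fintype.card_sum.trans (two_mul _).symm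

theorem card_iterate_ILTT (T : Tournament) (t : ℕ) :
    Fintype.card (ILTT^[t] T).V = 2 ^ t * Fintype.card T.V := by
  induction t with
  | zero => rw [Function.iterate_zero_apply, pow_zero, one_mul]
  | succ t ih => rw [Function.iterate_succ_apply', card_ILTT, ih, pow_succ', mul_assoc]

instance nontrivial_iterate_ILTT [Nontrivial T.V] (t : ℕ) : Nontrivial (ILTT^[t] T).V := by
  rw [← Fintype.one_lt_card_iff_nontrivial, card_iterate_ILTT]
  exact Fintype.one_lt_card.trans_le (Nat.le_mul_of_pos_left _ (by positivity))

theorem Strong.iterate_ILTT [Nontrivial T.V] (hT : T.Strong) (t : ℕ) :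
    (ILTT^[t] T).Strong := by
  induction t with
  | zero => exact hT
  | succ t ih =>
    rw [Function.iterate_succ_apply']
    exact ih.ILTT

theorem Strong.wiener_iterate_ILTT_succ [Nontrivial T.V] (hT : T.Strong) (t : ℕ) :
    (ILTT^[t + 1] T).wiener =
      4 * (2 ^ t * Fintype.card T.V) + 4 * (ILTT^[t] T).wiener := by
  rw [Function.iterate_succ_apply', (hT.iterate_ILTT t).wiener_ILTT, card_iterate_ILTT]

end Tournament

/-- For a strong tournament `G` of order `n ≥ 3` and every `t ≥ 0`,
`W(ILTT^t(G)) = 2^(t+1)(2^t - 1)n + 4^t·W(G)`. -/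
theorem stmt7 (G : Tournament) (n : ℕ) (hn : Fintype.card G.V = n)
    (hcard : 3 ≤ n) (hG : G.Strong) :
    ∀ t : ℕ, (Tournament.ILTT^[t] G).wiener =
      2 ^ (t + 1) * (2 ^ t - 1) * n + 4 ^ t * G.wiener := by
  intro t
  have : Nontrivial G.V := Fintype.one_lt_card_iff_nontrivial.1 (by omega)
  induction t with
  | zero => simp
  | succ t ih =>
    have coeff_succ : 2 ^ (t + 2) * (2 ^ (t + 1) - 1) =
        4 * 2 ^ t + 4 * (2 ^ (t + 1) * (2 ^ t - 1)) := by
      zify [Nat.one_le_two_pow (n := t), Nat.one_le_two_pow (n := t + 1)]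
      ring
    rw [hG.wiener_iterate_ILTT_succ, ih, hn, coeff_succ]
    ring
end
end
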